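/- Fix q > 0, a ∈ ℝ³ ∖ {0} and ι ∈ {+1, −1}. Let x : I → ℝ³ be a C¹ curve with x(t) ≠ 0 and ρ(x(t),a) > 1 for all t ∈ I, solving x′(t) = ∇_x S_ι(x(t),a). Then the associated angle Θ(t) := ∇_a S_ι(x(t),a) evolves linearly: Θ′(t) = a for all t ∈ I. -/

import Mathlib

/-!
With `κ(s) = √((s-1)/s)` one has `K' = κ` on `s > 1` (`hasDerivAt_KF`), which gives both gradients of
`S_ι` in closed form (`hasGradientAt_Sgen_left`, `hasGradientAt_Sgen_right`):
`∇ₓS = (ικ-1)/2 · (|a|/|x|) x + (ικ+1)/2 · a`, and `∇ₐS` is a combination of `a` and `x`.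
Along the flow `x' = ∇ₓS` this yields `ρ' = ικ |a| ρ / |x|`, and hence
`(κ(ρ))' = ι |a| / (2 |x| ρ)`. Differentiating the closed form of `∇ₐS` along the curve with these
two identities, and using `ι² = 1` and `κ² = 1 - 1/ρ`, one finds that the coefficient of `x`
vanishes and that of `a` is `1`.

Conceptually, this is the derivative in `a` of the Hamilton–Jacobi identity
`|∇ₓS|² + q/|x| = |a|²`; the explicit computation avoids any appeal to second derivatives of `S`.
-/

open scoped RealInnerProductSpace

noncomputable section

/-- Euclidean three-space. -/
abbrev R3 : Type := EuclideanSpace ℝ (Fin 3)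

/-- `ρ(x,a) = (|a|/(2q))(|x||a| + x·a)`. -/
def rhoF (q : ℝ) (x a : R3) : ℝ := ‖a‖ / (2 * q) * (‖x‖ * ‖a‖ + ⟪x, a⟫)

/-- `K(s) = √(s(s−1)) − ln(√s + √(s−1))`. -/
def KF (s : ℝ) : ℝ := Real.sqrt (s * (s - 1)) - Real.log (Real.sqrt s + Real.sqrt (s - 1))

/-- The generating function `S_ι(x,a) = ι·(q/|a|)·K(ρ(x,a)) − (|x||a| − x·a)/2`. -/
def Sgen (q ι : ℝ) (x a : R3) : ℝ :=
  ι * (q / ‖a‖) * KF (rhoF q x a) - (‖x‖ * ‖a‖ - ⟪x, a⟫) / 2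

/-- `κ(s) = √((s-1)/s)`, the derivative of `K` on `s > 1`. -/
def kap (s : ℝ) : ℝ := Real.sqrt ((s - 1) / s)

lemma kap_pos {s : ℝ} (hs : 1 < s) : 0 < kap s :=
  Real.sqrt_pos.2 (div_pos (by linarith) (by linarith))

lemma kap_sq {s : ℝ} (hs : 1 < s) : kap s ^ 2 = (s - 1) / s :=
  Real.sq_sqrt (div_pos (by linarith) (by linarith)).le

lemma hasDerivAt_kap {s : ℝ} (hs : 1 < s) : HasDerivAt kap (1 / (2 * s ^ 2 * kap s)) s := by
  have hk := kap_pos hs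
  have h1 : HasDerivAt (fun s : ℝ => (s - 1) / s) ((1 * s - (s - 1) * 1) / s ^ 2) s :=
    ((hasDerivAt_id s).sub_const 1).div (hasDerivAt_id s) (by simp; linarith)
  have h2 := h1.sqrt (div_pos (by linarith) (by linarith)).ne'
  refine h2.congr_deriv ?_
  change _ / (2 * kap s) = _
  have : s ≠ 0 := by linarith
  field_simp
  ring

lemma hasDerivAt_KF {s : ℝ} (hs : 1 < s) : HasDerivAt KF (kap s) s := by
  have hs0 : 0 < s := by linarith
  have hs1 : 0 < s - 1 := by linarith
  have hu := Real.sqrt_pos.2 hs0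
  have hv := Real.sqrt_pos.2 hs1
  have hu2 := Real.sq_sqrt hs0.le
  have hv2 := Real.sq_sqrt hs1.le
  have d1 : HasDerivAt (fun s : ℝ => s - 1) 1 s := (hasDerivAt_id s).sub_const 1
  have h1 := ((hasDerivAt_id s).mul d1).sqrt (mul_pos hs0 hs1).ne'
  have h2 := (((hasDerivAt_id s).sqrt hs0.ne').add (d1.sqrt hs1.ne')).log (add_pos hu hv).ne'
  refine HasDerivAt.congr_deriv (f := KF) (h1.sub h2) ?_
  simp only [Pi.mul_apply, Pi.add_apply, id]
  rw [kap, Real.sqrt_div hs1.le, Real.sqrt_mul hs0.le]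
  generalize Real.sqrt s = u at *
  generalize Real.sqrt (s - 1) = v at *
  have : u + v ≠ 0 := (add_pos hu hv).ne'
  field_simp
  rw [← hv2, ← hu2]
  have huv : u ^ 2 - v ^ 2 = 1 := by linarith
  linear_combination (u + v) * huv

lemma hasFDerivAt_norm_R3 {x : R3} (hx : x ≠ 0) :
    HasFDerivAt (fun y : R3 => ‖y‖) (‖x‖⁻¹ • innerSL ℝ x) x := by
  have hn : 0 < ‖x‖ := norm_pos_iff.2 hx
  have h := (hasStrictFDerivAt_norm_sq x).hasFDerivAt.sqrt (pow_pos hn 2).ne'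
  simp only [Real.sqrt_sq (norm_nonneg _)] at h
  refine h.congr_fderiv ?_
  ext v
  simp
  field_simp

lemma hasGradientAt_Sgen_left {q ι : ℝ} (hq : 0 < q) {x a : R3} (hx : x ≠ 0) (ha : a ≠ 0)
    (hρ : 1 < rhoF q x a) :
    HasGradientAt (fun y => Sgen q ι y a)
      (((ι * kap (rhoF q x a) - 1) / 2 * (‖a‖ / ‖x‖)) • x
        + ((ι * kap (rhoF q x a) + 1) / 2) • a) x := by
  have hn : 0 < ‖a‖ := norm_pos_iff.2 ha
  have hr : 0 < ‖x‖ := norm_pos_iff.2 hx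
  have d1 := (hasFDerivAt_norm_R3 hx).mul_const ‖a‖
  have d2 : HasFDerivAt (fun y : R3 => ⟪y, a⟫) (innerSL ℝ a) x := by
    simpa [real_inner_comm] using (innerSL ℝ a).hasFDerivAt (x := x)
  have dρ : HasFDerivAt (fun y => rhoF q y a) _ x := (d1.add d2).const_mul (‖a‖ / (2 * q))
  have dK := (hasDerivAt_KF hρ).comp_hasFDerivAt x dρ
  have dS : HasFDerivAt (fun y => Sgen q ι y a) _ x :=
    (dK.const_mul (ι * (q / ‖a‖))).sub ((d1.sub d2).mul_const (2⁻¹))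
  rw [hasGradientAt_iff_hasFDerivAt]
  refine dS.congr_fderiv ?_
  ext v
  simp
  field_simp
  ring

lemma hasGradientAt_Sgen_right {q ι : ℝ} (hq : 0 < q) {x a : R3} (ha : a ≠ 0)
    (hρ : 1 < rhoF q x a) :
    HasGradientAt (fun b => Sgen q ι x b)
      (((-(ι * q * KF (rhoF q x a) / ‖a‖ ^ 2)
          + ι * kap (rhoF q x a) * (2 * ‖x‖ * ‖a‖ + ⟪x, a⟫) / (2 * ‖a‖) - ‖x‖ / 2) / ‖a‖) • a
        + ((ι * kap (rhoF q x a) + 1) / 2) • x) a := by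
  have hn : 0 < ‖a‖ := norm_pos_iff.2 ha
  have d0 := hasFDerivAt_norm_R3 ha
  have d1 := d0.const_mul ‖x‖
  have d2 : HasFDerivAt (fun y : R3 => ⟪x, y⟫) (innerSL ℝ x) a := (innerSL ℝ x).hasFDerivAt
  have dρ : HasFDerivAt (fun b => rhoF q x b) _ a := (d0.mul_const ((2 * q)⁻¹)).mul (d1.add d2)
  have dK := (hasDerivAt_KF hρ).comp_hasFDerivAt a dρ
  have di := ((hasDerivAt_inv hn.ne').comp_hasFDerivAt a d0).const_mul q |>.const_mul ι
  have dS : HasFDerivAt (fun b => Sgen q ι x b) _ a :=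
    (di.mul dK).sub ((d1.sub d2).mul_const (2⁻¹))
  rw [hasGradientAt_iff_hasFDerivAt]
  refine dS.congr_fderiv ?_
  ext v
  simp
  field_simp
  ring

/-- If a `C¹` curve `x` in the region `{x ≠ 0, ρ(x,a) > 1}` solves the gradient flow
`x' = ∇ₓ S_ι(x,a)`, then the associated angle `Θ(t) := ∇ₐ S_ι(x(t),a)` evolves
linearly: `Θ'(t) = a`. -/
theorem generating_function_angle_linear (q : ℝ) (hq : 0 < q)
    (ι : ℝ) (hι : ι = 1 ∨ ι = -1) (a : R3) (ha : a ≠ 0)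
    (I : Set ℝ) (hI : Convex ℝ I) (x : ℝ → R3)
    (hx0 : ∀ t ∈ I, x t ≠ 0)
    (hρ : ∀ t ∈ I, 1 < rhoF q (x t) a)
    (hx : ∀ t ∈ I, HasDerivWithinAt x (gradient (fun y => Sgen q ι y a) (x t)) I t) :
    ∀ t ∈ I,
      HasDerivWithinAt (fun s => gradient (fun b => Sgen q ι (x s) b) a) a I t := by
  intro t ht
  have hn : 0 < ‖a‖ := norm_pos_iff.2 ha
  have hr : 0 < ‖x t‖ := norm_pos_iff.2 (hx0 t ht)
  have hs := hρ t ht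
  have hs0 : 0 < rhoF q (x t) a := by linarith
  have hk := kap_pos hs
  have hk2 := kap_sq hs
  have dx := hx t ht
  rw [(hasGradientAt_Sgen_left hq (hx0 t ht) ha hs).gradient] at dx
  have dr := (hasFDerivAt_norm_R3 (hx0 t ht)).comp_hasDerivWithinAt t dx
  have dp := (innerSL ℝ a).hasFDerivAt.comp_hasDerivWithinAt t dx
  have hρdef : rhoF q (x t) a = ‖a‖ / (2 * q) * (‖x t‖ * ‖a‖ + ⟪x t, a⟫) := rfl
  have dr' : HasDerivWithinAt (fun s => ‖x s‖)
      ((ι * kap (rhoF q (x t) a) - 1) / 2 * ‖a‖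
        + (ι * kap (rhoF q (x t) a) + 1) / 2 * (⟪x t, a⟫ / ‖x t‖)) I t := by
    refine dr.congr_deriv ?_
    simp [inner_add_right, inner_smul_right]
    field_simp
  have dp' : HasDerivWithinAt (fun s => ⟪x s, a⟫)
      ((ι * kap (rhoF q (x t) a) - 1) / 2 * (‖a‖ * ⟪x t, a⟫ / ‖x t‖)
        + (ι * kap (rhoF q (x t) a) + 1) / 2 * ‖a‖ ^ 2) I t := by
    have : (fun s => ⟪x s, a⟫) = (innerSL ℝ a) ∘ x := by
      ext s; simp [real_inner_comm]
    rw [this]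
    refine dp.congr_deriv ?_
    simp [inner_add_right, inner_smul_right, real_inner_comm]
    field_simp
  clear dr dp
  have dρ : HasDerivWithinAt (fun s => rhoF q (x s) a)
      (ι * kap (rhoF q (x t) a) * ‖a‖ * rhoF q (x t) a / ‖x t‖) I t := by
    refine (((dr'.mul_const ‖a‖).add dp').const_mul (‖a‖ / (2 * q))).congr_deriv ?_
    generalize kap (rhoF q (x t) a) = k
    rw [hρdef]
    field_simp
    ring
  have dκ : HasDerivWithinAt (fun s => kap (rhoF q (x s) a))
      (ι * ‖a‖ / (2 * ‖x t‖ * rhoF q (x t) a)) I t := by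
    refine ((hasDerivAt_kap hs).comp_hasDerivWithinAt t dρ).congr_deriv ?_
    field_simp
  have dK : HasDerivWithinAt (fun s => KF (rhoF q (x s) a))
      (kap (rhoF q (x t) a) * (ι * kap (rhoF q (x t) a) * ‖a‖ * rhoF q (x t) a / ‖x t‖)) I t :=
    HasDerivAt.comp_hasDerivWithinAt (h₂ := KF) t (hasDerivAt_KF hs) dρ
  -- the closed form of `∇ₐS` is available only on `I`, where `ρ > 1`
  have hcongr := fun s (hs : s ∈ I) =>
    (hasGradientAt_Sgen_right (ι := ι) hq (x := x s) ha (hρ s hs)).gradient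
  refine HasDerivWithinAt.congr ?_ hcongr (hcongr t ht)
  have dG := ((((dK.const_mul (ι * q)).div_const (‖a‖ ^ 2)).neg.add
    (((dκ.const_mul ι).mul (((dr'.const_mul 2).mul_const ‖a‖).add dp')).div_const
      (2 * ‖a‖))).sub (dr'.div_const 2)).div_const ‖a‖
  have dH := ((dκ.const_mul ι).add_const 1).div_const 2
  refine ((dG.smul_const a).add (dH.smul dx)).congr_deriv ?_
  simp only [Pi.add_apply]
  -- eliminate `x·a` and `ρ` in favour of `κ`, via the definition of `ρ` and `κ² = 1 - 1/ρ`
  have hp : ⟪x t, a⟫ = 2 * q * rhoF q (x t) a / ‖a‖ - ‖x t‖ * ‖a‖ := by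
    rw [hρdef]
    field_simp
    ring
  have hw : 1 - kap (rhoF q (x t) a) ^ 2 = (rhoF q (x t) a)⁻¹ := by
    rw [hk2]
    field_simp
    ring
  have hw0 : 1 - kap (rhoF q (x t) a) ^ 2 ≠ 0 := by
    rw [hw]
    exact (inv_pos.2 hs0).ne'
  have hm : rhoF q (x t) a = (1 - kap (rhoF q (x t) a) ^ 2)⁻¹ := by rw [hw, inv_inv]
  rw [hp]
  clear hw hk2 dG dH dK dκ dρ dr' dp' dx hρdef hcongr hp
  generalize kap (rhoF q (x t) a) = k at *
  rw [hm]
  -- the coefficients of `a` and of `x`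
  match_scalars
  · rcases hι with rfl | rfl <;> field_simp <;> ring
  · rcases hι with rfl | rfl <;> field_simp <;> ring
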